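/- A permutation σ of [n] is nonnesting if and only if it avoids the pattern 321: nes(σ) = 0 ⟺ σ ∈ S_n(321). Equivalently, the set of nonnesting permutations of [n] equals S_n(321). -/

import Mathlib

open Equiv Finset

/-- Number of crossings of a permutation of `Fin n` (0-indexed version of the
classical definition on `[n] = {1,…,n}`): pairs `(i,j)` with
`i<j<σ(i)<σ(j)` or `σ(i)<σ(j)≤i<j`. -/
def crs {n : ℕ} (σ : Equiv.Perm (Fin n)) : ℕ :=
  (Finset.univ.filter (fun q : Fin n × Fin n =>
    ((q.1 : ℕ) < q.2 ∧ (q.2 : ℕ) < σ q.1 ∧ (σ q.1 : ℕ) < σ q.2) ∨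
    ((σ q.1 : ℕ) < σ q.2 ∧ (σ q.2 : ℕ) ≤ q.1 ∧ (q.1 : ℕ) < q.2))).card

/-- Number of nestings of a permutation of `Fin n`: pairs `(i,j)` with
`i<j<σ(j)<σ(i)` or `σ(j)<σ(i)≤i<j`. -/
def nes {n : ℕ} (σ : Equiv.Perm (Fin n)) : ℕ :=
  (Finset.univ.filter (fun q : Fin n × Fin n =>
    ((q.1 : ℕ) < q.2 ∧ (q.2 : ℕ) < σ q.2 ∧ (σ q.2 : ℕ) < σ q.1) ∨
    ((σ q.2 : ℕ) < σ q.1 ∧ (σ q.1 : ℕ) ≤ q.1 ∧ (q.1 : ℕ) < q.2))).card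

/-- Number of fixed points. -/
def fp {n : ℕ} (σ : Equiv.Perm (Fin n)) : ℕ :=
  (Finset.univ.filter (fun i : Fin n => σ i = i)).card

/-- Number of excedances. -/
def exc {n : ℕ} (σ : Equiv.Perm (Fin n)) : ℕ :=
  (Finset.univ.filter (fun i : Fin n => (i : ℕ) < σ i)).card

/-- Number of inversions. -/
def invStat {n : ℕ} (σ : Equiv.Perm (Fin n)) : ℕ :=
  (Finset.univ.filter (fun q : Fin n × Fin n => q.1 < q.2 ∧ σ q.2 < σ q.1)).card

/-- `σ` contains the pattern `τ`: there is a strictly increasing choice of positions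
on which `σ` is order-isomorphic to `τ`. -/
def Contains {n k : ℕ} (σ : Equiv.Perm (Fin n)) (τ : Equiv.Perm (Fin k)) : Prop :=
  ∃ f : Fin k → Fin n, StrictMono f ∧ ∀ a b : Fin k, σ (f a) < σ (f b) ↔ τ a < τ b

/-- `σ` avoids the pattern `τ`. -/
def Avoids {n k : ℕ} (σ : Equiv.Perm (Fin n)) (τ : Equiv.Perm (Fin k)) : Prop :=
  ¬ Contains σ τ

/-- The pattern 123 (as a permutation of `Fin 3`, 0-indexed). -/
def p123 : Equiv.Perm (Fin 3) := 1
/-- The pattern 132. -/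
def p132 : Equiv.Perm (Fin 3) := Equiv.swap 1 2
/-- The pattern 213. -/
def p213 : Equiv.Perm (Fin 3) := Equiv.swap 0 1
/-- The pattern 321. -/
def p321 : Equiv.Perm (Fin 3) := Equiv.swap 0 2
/-- The pattern 231. -/
def p231 : Equiv.Perm (Fin 3) := Equiv.swap 0 2 * Equiv.swap 0 1
/-- The pattern 312. -/
def p312 : Equiv.Perm (Fin 3) := Equiv.swap 0 2 * Equiv.swap 1 2

/-! A permutation preserving a finite set restricts to a permutation of it, so if the set
`{x | x < a}` is finite, some point moves up across the cut at `a` iff some point moves down.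
If `i < j < σ j < σ i`, then `j` moves up across the cut at `σ j`; a point `k` moving down across
it gives the decreasing triple `i, j, k`. If `σ j < σ i ≤ i < j`, then `j` moves down across the
cut at `i`; a point `k` moving up across it gives the decreasing triple `k, i, j`. Conversely, in
a decreasing triple `i, j, k` the pair `(i, j)` or `(j, k)` is a nesting, according to whether
`j < σ j` or not. -/

theorem exists_mem_apply_notMem_iff {α : Type*} (σ : Perm α) (s : Set α) [Finite s] :
    (∃ x ∈ s, σ x ∉ s) ↔ ∃ x ∉ s, σ x ∈ s := by
  have hsymm : Set.MapsTo σ.symm s s ↔ Set.MapsTo σ s s := Perm.perm_symm_mapsTo_iff_mapsTo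
  rw [← not_iff_not]
  push Not
  calc (∀ x ∈ s, σ x ∈ s)
      ↔ ∀ y ∈ s, σ.symm y ∈ s := hsymm.symm
    _ ↔ ∀ x, σ x ∈ s → x ∈ s := σ.symm.forall_congr fun y => by rw [σ.apply_symm_apply]
    _ ↔ ∀ x ∉ s, σ x ∉ s := forall_congr' fun _ => not_imp_not.symm

section Cut

variable {α : Type*} [LinearOrder α] [LocallyFiniteOrderBot α]

theorem exists_lt_le_apply_iff (σ : Perm α) (a : α) :
    (∃ x < a, a ≤ σ x) ↔ ∃ x ≥ a, σ x < a := by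
  have : Finite (Set.Iio a) := Set.finite_Iio a
  simpa using exists_mem_apply_notMem_iff σ (Set.Iio a)

theorem exists_gt_apply_lt_of_lt_apply {σ : Perm α} {j : α} (hj : j < σ j) :
    ∃ k > j, σ k < σ j := by
  obtain ⟨k, hk, hkj⟩ := (exists_lt_le_apply_iff σ (σ j)).1 ⟨j, hj, le_rfl⟩
  exact ⟨k, hj.trans_le hk, hkj⟩

theorem exists_lt_lt_apply_of_apply_lt {σ : Perm α} {i j : α} (hi : σ i ≤ i) (hij : i < j)
    (hji : σ j < i) : ∃ k < i, σ i < σ k := by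
  obtain ⟨k, hki, hik⟩ := (exists_lt_le_apply_iff σ i).2 ⟨j, hij.le, hji⟩
  exact ⟨k, hki, (hi.trans hik).lt_of_ne (σ.injective.ne hki.ne')⟩

end Cut

/-- The pair `(i, j)` is a nesting of `σ`. For permutations of `Fin n` these are the pairs counted
by `nes`; here the underlying type is any ordered type. -/
def IsNesting {α : Type*} [Preorder α] (σ : Perm α) (i j : α) : Prop :=
  (i < j ∧ j < σ j ∧ σ j < σ i) ∨ (σ j < σ i ∧ σ i ≤ i ∧ i < j)

theorem IsNesting.exists_decreasing_triple {α : Type*} [LinearOrder α] [LocallyFiniteOrderBot α]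
    {σ : Perm α} {i j : α} (h : IsNesting σ i j) :
    ∃ a b c, a < b ∧ b < c ∧ σ b < σ a ∧ σ c < σ b := by
  rcases h with ⟨hij, hj, hji⟩ | ⟨hji, hi, hij⟩
  · obtain ⟨k, hjk, hkj⟩ := exists_gt_apply_lt_of_lt_apply hj
    exact ⟨i, j, k, hij, hjk, hji, hkj⟩
  · obtain ⟨k, hki, hik⟩ := exists_lt_lt_apply_of_apply_lt hi hij (hji.trans_le hi)
    exact ⟨k, i, j, hki, hij, hik, hji⟩

theorem isNesting_or_isNesting_of_decreasing_triple {α : Type*} [LinearOrder α] {σ : Perm α}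
    {a b c : α} (hab : a < b) (hbc : b < c) (hba : σ b < σ a) (hcb : σ c < σ b) :
    IsNesting σ a b ∨ IsNesting σ b c := by
  rcases lt_or_ge b (σ b) with hb | hb
  · exact .inl (.inl ⟨hab, hb, hba⟩)
  · exact .inr (.inr ⟨hcb, hb, hbc⟩)

theorem nonnesting_iff_avoids_321_general {α : Type*} [LinearOrder α] [LocallyFiniteOrderBot α]
    (σ : Perm α) :
    (¬∃ i j, IsNesting σ i j) ↔ ¬∃ a b c, a < b ∧ b < c ∧ σ b < σ a ∧ σ c < σ b := by
  refine not_congr ⟨fun ⟨_, _, h⟩ => h.exists_decreasing_triple, ?_⟩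
  rintro ⟨a, b, c, hab, hbc, hba, hcb⟩
  rcases isNesting_or_isNesting_of_decreasing_triple hab hbc hba hcb with h | h
  · exact ⟨a, b, h⟩
  · exact ⟨b, c, h⟩

theorem nes_eq_zero_iff {n : ℕ} (σ : Perm (Fin n)) : nes σ = 0 ↔ ¬∃ i j, IsNesting σ i j := by
  simp [nes, IsNesting, filter_eq_empty_iff]

theorem contains_revPerm_iff {n k : ℕ} (σ : Perm (Fin n)) :
    Contains σ (Fin.revPerm : Perm (Fin k)) ↔
      ∃ f : Fin k → Fin n, StrictMono f ∧ StrictAnti (σ ∘ f) := by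
  refine exists_congr fun f => and_congr_right fun _ => ⟨fun h a b hab => ?_, fun h a b => ?_⟩
  · exact (h b a).2 (Fin.rev_lt_rev.2 hab)
  · exact h.lt_iff_gt.trans Fin.rev_lt_rev.symm

theorem exists_strictMono_strictAnti_comp_iff {α β : Type*} [Preorder α] [Preorder β]
    (g : α → β) :
    (∃ f : Fin 3 → α, StrictMono f ∧ StrictAnti (g ∘ f)) ↔
      ∃ a b c, a < b ∧ b < c ∧ g b < g a ∧ g c < g b := by
  constructor
  · rintro ⟨f, hf, hgf⟩
    have h01 : (0 : Fin 3) < 1 := by decide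
    have h12 : (1 : Fin 3) < 2 := by decide
    exact ⟨f 0, f 1, f 2, hf h01, hf h12, hgf h01, hgf h12⟩
  · rintro ⟨a, b, c, hab, hbc, hba, hcb⟩
    refine ⟨![a, b, c], by simp [hab, hbc], ?_⟩
    have hcomp : g ∘ ![a, b, c] = ![g a, g b, g c] := (FinVec.map_eq g _).symm
    simp [hcomp, hba, hcb]

theorem p321_eq_revPerm : p321 = Fin.revPerm := by
  decide

theorem contains_p321_iff {n : ℕ} (σ : Perm (Fin n)) :
    Contains σ p321 ↔ ∃ a b c, a < b ∧ b < c ∧ σ b < σ a ∧ σ c < σ b := by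
  rw [p321_eq_revPerm, contains_revPerm_iff, exists_strictMono_strictAnti_comp_iff]

/-- A permutation is nonnesting if and only if it avoids the pattern 321;
equivalently, the set of nonnesting permutations of `[n]` equals `S_n(321)`. -/
theorem nonnesting_iff_avoids_321 (n : ℕ) :
    (∀ σ : Equiv.Perm (Fin n), nes σ = 0 ↔ Avoids σ p321) ∧
    {σ : Equiv.Perm (Fin n) | nes σ = 0} = {σ : Equiv.Perm (Fin n) | Avoids σ p321} := by
  have h (σ : Perm (Fin n)) : nes σ = 0 ↔ Avoids σ p321 := by
    rw [nes_eq_zero_iff, nonnesting_iff_avoids_321_general, Avoids, contains_p321_iff]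
  exact ⟨h, Set.ext h⟩
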